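/- arXiv:1709.06120 — 2 statements merged into one kernel-verified Lean document; each statement's English description precedes it below -/
import Mathlib

section
/- Let n ≥ 2, p > 1, r > 1, and real numbers α, β, γ satisfy 1/r − γ/n > 0, 1/p − α/n > 0, 1 − β/n > 0, and γ = (1+α)/r + ((p−1)/(pr))β. Then for every smooth compactly supported function f : ℝ^n → ℝ, ∫_{ℝ^n} |f(x)|^r |x|^{−γ r} dx ≤ (r/(n−γ r)) · (∫_{ℝ^n} |∂_r f(x)|^p |x|^{−α p} dx)^{1/p} · (∫_{ℝ^n} |f(x)|^{p(r−1)/(p−1)} |x|^{−β} dx)^{(p−1)/p}, where ∂_r f(x) = ⟨x/|x|, ∇f(x)⟩ is the radial derivative. -/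
open Real MeasureTheory RealInnerProductSpace

/-!
Dilating `x ↦ g (t • x)` and differentiating `∫ ‖x‖ ^ (-s) g (t • x) = t ^ (s - d) ∫ ‖x‖ ^ (-s) g x`
at `t = 1` gives Euler's identity `∫ ‖x‖ ^ (-s) Dg(x) x = (s - d) ∫ ‖x‖ ^ (-s) g x`. For
`g = ‖f‖ ^ r` and `s = γ r` it bounds the left-hand side by a weighted integral of
`‖f‖ ^ (r - 1) ‖∂_r f‖`, and the balance condition is exactly what lets the weight split between the
two factors in Hölder's inequality.
-/

section NormPowers

variable {X F : Type*} [NormedAddCommGroup F] {h : X → F} {e : ℝ}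

lemma memLp_top_norm_rpow [MeasurableSpace X] {μ : Measure X} (hbdd : MemLp h ⊤ μ) (he : 0 ≤ e) :
    MemLp (fun x => ‖h x‖ ^ e) ⊤ μ := by
  simpa [ENNReal.toReal_ofReal he, ENNReal.top_div] using hbdd.norm_rpow_div (ENNReal.ofReal e)

lemma hasCompactSupport_norm_rpow [TopologicalSpace X] (hsupp : HasCompactSupport h) (he : e ≠ 0) :
    HasCompactSupport fun x => ‖h x‖ ^ e :=
  hsupp.comp_left (g := fun y => ‖y‖ ^ e) (by simp [he])

end NormPowers

section Weights

open Module

variable {E F G : Type*} [NormedAddCommGroup E] [NormedSpace ℝ E] [FiniteDimensional ℝ E]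
  [Nontrivial E] [MeasurableSpace E] [BorelSpace E] {μ : Measure E} [μ.IsAddHaarMeasure]
  [NormedAddCommGroup F] [NormedAddCommGroup G]

lemma locallyIntegrable_norm_rpow_neg {s : ℝ} (hs : s < finrank ℝ E) :
    LocallyIntegrable (fun x : E => ‖x‖ ^ (-s)) μ := by
  refine locallyIntegrable_of_norm_le_rpow (C := 1) finrank_pos hs (.of_forall fun x => ?_)
    (measurable_norm.pow_const _).aestronglyMeasurable
  rw [one_mul, norm_of_nonneg (by positivity)]

lemma integrable_norm_rpow_neg_smul [NormedSpace ℝ F] {s : ℝ} (hs : s < finrank ℝ E) {h : E → F}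
    (hbdd : MemLp h ⊤ μ) (hsupp : HasCompactSupport h) :
    Integrable (fun x => ‖x‖ ^ (-s) • h x) μ := by
  have hK : IntegrableOn (fun x => ‖x‖ ^ (-s) • h x) (tsupport h) μ :=
    ((locallyIntegrable_norm_rpow_neg hs).integrableOn_isCompact hsupp).smul_of_top_left
      (hbdd.restrict _)
  exact (integrableOn_iff_integrable_of_support_subset
    ((Function.support_smul_subset_right _ h).trans (subset_tsupport h))).1 hK

lemma memLp_norm_rpow_neg_mul_norm {p a : ℝ} (hp : 0 < p) (ha : a * p < finrank ℝ E) {h : E → F}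
    (hbdd : MemLp h ⊤ μ) (hsupp : HasCompactSupport h) :
    MemLp (fun x => ‖x‖ ^ (-a) * ‖h x‖) (ENNReal.ofReal p) μ := by
  have hmeas : AEStronglyMeasurable (fun x => ‖x‖ ^ (-a) * ‖h x‖) μ :=
    (measurable_norm.pow_const _).aestronglyMeasurable.mul hbdd.1.norm
  rw [← integrable_norm_rpow_iff hmeas (by simpa using hp) (by simp), ENNReal.toReal_ofReal hp.le]
  refine (integrable_norm_rpow_neg_smul ha (memLp_top_norm_rpow hbdd hp.le)
    (hasCompactSupport_norm_rpow hsupp hp.ne')).congr (.of_forall fun x => ?_)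
  simp only [smul_eq_mul]
  rw [norm_of_nonneg (by positivity), mul_rpow (by positivity) (norm_nonneg _),
    ← rpow_mul (norm_nonneg _), neg_mul]

theorem integral_norm_rpow_neg_mul_norm_mul_norm_le {p q a b : ℝ} (hpq : p.HolderConjugate q)
    (ha : a * p < finrank ℝ E) (hb : b * q < finrank ℝ E) {u : E → F} {v : E → G}
    (hu : MemLp u ⊤ μ) (hu_supp : HasCompactSupport u)
    (hv : MemLp v ⊤ μ) (hv_supp : HasCompactSupport v) :
    ∫ x, ‖x‖ ^ (-(a + b)) * (‖u x‖ * ‖v x‖) ∂μ ≤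
      (∫ x, ‖u x‖ ^ p * ‖x‖ ^ (-(a * p)) ∂μ) ^ (1 / p) *
        (∫ x, ‖v x‖ ^ q * ‖x‖ ^ (-(b * q)) ∂μ) ^ (1 / q) := by
  have hsplit : ∫ x, ‖x‖ ^ (-(a + b)) * (‖u x‖ * ‖v x‖) ∂μ =
      ∫ x, (‖x‖ ^ (-a) * ‖u x‖) * (‖x‖ ^ (-b) * ‖v x‖) ∂μ := by
    refine integral_congr_ae ?_
    filter_upwards [Measure.ae_ne μ 0] with x hx
    rw [neg_add, rpow_add (norm_pos_iff.2 hx)]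
    ring
  have hpow (c e : ℝ) (x : E) (y : ℝ) (hy : 0 ≤ y) :
      (‖x‖ ^ (-c) * y) ^ e = y ^ e * ‖x‖ ^ (-(c * e)) := by
    rw [mul_rpow (by positivity) hy, ← rpow_mul (norm_nonneg _), neg_mul, mul_comm]
  have hHolder := integral_mul_le_Lp_mul_Lq_of_nonneg hpq
    (.of_forall fun x => by positivity) (.of_forall fun x => by positivity)
    (memLp_norm_rpow_neg_mul_norm hpq.pos ha hu hu_supp)
    (memLp_norm_rpow_neg_mul_norm hpq.symm.pos hb hv hv_supp)
  simpa only [hsplit, hpow _ _ _ _ (norm_nonneg _)] using hHolder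

end Weights

section Euler

open Module

variable {E G : Type*} [NormedAddCommGroup E] [NormedSpace ℝ E] [NormedAddCommGroup G]
  [NormedSpace ℝ G]

lemma exists_norm_fderiv_smul_apply_le_indicator {g : E → G} (hg : ContDiff ℝ 1 g)
    (hsupp : HasCompactSupport g) :
    ∃ C R : ℝ, ∀ t ∈ Metric.ball (1 : ℝ) (1 / 2), ∀ x,
      ‖fderiv ℝ g (t • x) x‖ ≤ (Metric.closedBall 0 R).indicator (fun _ => C) x := by
  obtain ⟨K, hK⟩ :=
    (hsupp.fderiv (𝕜 := ℝ)).exists_bound_of_continuous (hg.continuous_fderiv one_ne_zero)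
  obtain ⟨R, hR₀, hR⟩ := hsupp.isCompact.isBounded.exists_pos_norm_lt
  refine ⟨K * (2 * R), 2 * R, fun t ht x => ?_⟩
  have ht_half : 1 / 2 < t := by
    rw [Metric.mem_ball, dist_eq, abs_lt] at ht
    linarith [ht.1]
  by_cases hx : x ∈ Metric.closedBall 0 (2 * R)
  · rw [Set.indicator_of_mem hx]
    exact (fderiv ℝ g (t • x)).le_of_opNorm_le_of_le (hK _) (mem_closedBall_zero_iff.1 hx)
  · have htx : t • x ∉ tsupport g := fun hmem => by
      have hlt := hR _ hmem
      rw [norm_smul, norm_of_nonneg (by linarith)] at hlt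
      rw [mem_closedBall_zero_iff, not_le] at hx
      nlinarith
    rw [Set.indicator_of_notMem hx, fderiv_of_notMem_tsupport ℝ htx]
    simp

variable [FiniteDimensional ℝ E] [MeasurableSpace E] [BorelSpace E] {μ : Measure E}
  [μ.IsAddHaarMeasure]

lemma integral_norm_rpow_neg_smul_comp_smul (g : E → G) (s : ℝ) {t : ℝ} (ht : 0 < t) :
    ∫ x, ‖x‖ ^ (-s) • g (t • x) ∂μ = t ^ (s - finrank ℝ E) • ∫ x, ‖x‖ ^ (-s) • g x ∂μ := by
  have hweight (x : E) : ‖x‖ ^ (-s) • g (t • x) = t ^ s • (‖t • x‖ ^ (-s) • g (t • x)) := by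
    rw [norm_smul, norm_of_nonneg ht.le, mul_rpow ht.le (norm_nonneg _), smul_smul, ← mul_assoc,
      ← rpow_add ht, add_neg_cancel, rpow_zero, one_mul]
  simp_rw [hweight]
  rw [integral_smul,
    Measure.integral_comp_smul_of_nonneg μ (fun x => ‖x‖ ^ (-s) • g x) t (hR := ht.le), smul_smul,
    rpow_sub ht, rpow_natCast, div_eq_mul_inv]

variable [Nontrivial E]

lemma hasDerivAt_integral_norm_rpow_neg_smul_comp_smul {s : ℝ} (hs : s < finrank ℝ E) {g : E → G}
    (hg : ContDiff ℝ 1 g) (hsupp : HasCompactSupport g) :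
    HasDerivAt (fun t : ℝ => ∫ x, ‖x‖ ^ (-s) • g (t • x) ∂μ)
      (∫ x, ‖x‖ ^ (-s) • fderiv ℝ g x x ∂μ) 1 := by
  obtain ⟨C, R, hCR⟩ := exists_norm_fderiv_smul_apply_le_indicator hg hsupp
  have hweight : AEStronglyMeasurable (fun x : E => ‖x‖ ^ (-s)) μ :=
    (measurable_norm.pow_const _).aestronglyMeasurable
  have hmeas (t : ℝ) : AEStronglyMeasurable (fun x => ‖x‖ ^ (-s) • g (t • x)) μ :=
    hweight.smul (hg.continuous.comp (continuous_const_smul t)).aestronglyMeasurable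
  have hmeas_deriv : AEStronglyMeasurable (fun x => ‖x‖ ^ (-s) • fderiv ℝ g ((1 : ℝ) • x) x) μ := by
    simp only [one_smul]
    exact hweight.smul
      ((hg.continuous_fderiv one_ne_zero).clm_apply continuous_id).aestronglyMeasurable
  have hint : Integrable (fun x => ‖x‖ ^ (-s) • g ((1 : ℝ) • x)) μ := by
    simpa only [one_smul] using
      integrable_norm_rpow_neg_smul hs (hg.continuous.memLp_top_of_hasCompactSupport hsupp μ) hsupp
  have hbound_int : Integrable
      (fun x => ‖x‖ ^ (-s) • (Metric.closedBall (0 : E) R).indicator (fun _ => C) x) μ :=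
    integrable_norm_rpow_neg_smul hs ((memLp_top_const C).indicator measurableSet_closedBall)
      (.intro (isCompact_closedBall 0 R) fun _ hx => Set.indicator_of_notMem hx _)
  have hbound (x : E) (t : ℝ) (ht : t ∈ Metric.ball (1 : ℝ) (1 / 2)) :
      ‖‖x‖ ^ (-s) • fderiv ℝ g (t • x) x‖ ≤
        ‖x‖ ^ (-s) • (Metric.closedBall (0 : E) R).indicator (fun _ => C) x := by
    rw [norm_smul, norm_of_nonneg (by positivity), smul_eq_mul]
    exact mul_le_mul_of_nonneg_left (hCR t ht x) (by positivity)
  have hderiv (x : E) (t : ℝ) :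
      HasDerivAt (fun t : ℝ => ‖x‖ ^ (-s) • g (t • x)) (‖x‖ ^ (-s) • fderiv ℝ g (t • x) x) t := by
    have hray : HasDerivAt (fun t : ℝ => t • x) x t := by
      simpa using (hasDerivAt_id t).smul_const x
    exact ((hg.differentiable one_ne_zero (t • x)).hasFDerivAt.comp_hasDerivAt t hray).const_smul _
  simpa only [one_smul] using (hasDerivAt_integral_of_dominated_loc_of_deriv_le
    (Metric.ball_mem_nhds 1 one_half_pos) (.of_forall hmeas) hint hmeas_deriv
    (.of_forall hbound) hbound_int (.of_forall fun x t _ => hderiv x t)).2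

theorem integral_norm_rpow_neg_smul_fderiv_apply_self {s : ℝ} (hs : s < finrank ℝ E) {g : E → G}
    (hg : ContDiff ℝ 1 g) (hsupp : HasCompactSupport g) :
    ∫ x, ‖x‖ ^ (-s) • fderiv ℝ g x x ∂μ = (s - finrank ℝ E) • ∫ x, ‖x‖ ^ (-s) • g x ∂μ := by
  have hscaling : HasDerivAt (fun t : ℝ => ∫ x, ‖x‖ ^ (-s) • g (t • x) ∂μ)
      ((s - finrank ℝ E) • ∫ x, ‖x‖ ^ (-s) • g x ∂μ) 1 := by
    have hpow : HasDerivAt (fun t : ℝ => t ^ (s - finrank ℝ E)) (s - finrank ℝ E) 1 := by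
      simpa using hasDerivAt_rpow_const (p := s - finrank ℝ E) (.inl (one_ne_zero' ℝ))
    refine (hpow.smul_const _).congr_of_eventuallyEq ?_
    filter_upwards [lt_mem_nhds one_pos] with t ht
    exact integral_norm_rpow_neg_smul_comp_smul g s ht
  exact (hasDerivAt_integral_norm_rpow_neg_smul_comp_smul hs hg hsupp).unique hscaling

end Euler

section RadialDerivative

variable {E F : Type*} [NormedAddCommGroup E] [NormedSpace ℝ E] [NormedAddCommGroup F]

section NormedSpace

variable [NormedSpace ℝ F]

/-- The derivative `∂_r f` of `f` along rays from the origin, the only part of `Df` that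
enters the radial Caffarelli-Kohn-Nirenberg inequality. Since `‖0‖⁻¹ = 0`, it vanishes at `0`. -/
noncomputable def radialDeriv (f : E → F) (x : E) : F :=
  fderiv ℝ f x (‖x‖⁻¹ • x)

lemma norm_smul_radialDeriv (f : E → F) (x : E) : ‖x‖ • radialDeriv f x = fderiv ℝ f x x := by
  rcases eq_or_ne x 0 with rfl | hx
  · simp
  · rw [radialDeriv, ← map_smul, smul_inv_smul₀ (norm_ne_zero_iff.2 hx)]

lemma norm_radialDeriv_le (f : E → F) (x : E) : ‖radialDeriv f x‖ ≤ ‖fderiv ℝ f x‖ := by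
  refine (fderiv ℝ f x).unit_le_opNorm _ ?_
  rw [norm_smul, norm_inv, norm_norm]
  exact inv_mul_le_one

lemma hasCompactSupport_radialDeriv {f : E → F} (hsupp : HasCompactSupport f) :
    HasCompactSupport (radialDeriv f) :=
  (hsupp.fderiv (𝕜 := ℝ)).mono fun x hx h => hx (by simp [radialDeriv, h])

lemma memLp_top_radialDeriv [FiniteDimensional ℝ E] [MeasurableSpace E] [BorelSpace E]
    {μ : Measure E} {f : E → F} (hf : ContDiff ℝ 1 f) (hsupp : HasCompactSupport f) :
    MemLp (radialDeriv f) ⊤ μ := by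
  have hcont := hf.continuous_fderiv one_ne_zero
  obtain ⟨K, hK⟩ := (hsupp.fderiv (𝕜 := ℝ)).exists_bound_of_continuous hcont
  have hmeas : AEStronglyMeasurable (radialDeriv f) μ := by
    have hsmul : radialDeriv f = fun x => ‖x‖⁻¹ • fderiv ℝ f x x :=
      funext fun x => map_smul (fderiv ℝ f x) ‖x‖⁻¹ x
    rw [hsmul]
    exact measurable_norm.inv.aestronglyMeasurable.smul
      (hcont.clm_apply continuous_id).aestronglyMeasurable
  exact memLp_top_of_bound hmeas K (.of_forall fun x => (norm_radialDeriv_le f x).trans (hK x))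

end NormedSpace

variable [InnerProductSpace ℝ F]

lemma norm_radialDeriv_norm_rpow_le {f : E → F} (hf : Differentiable ℝ f) {r : ℝ} (hr : 1 < r)
    (x : E) :
    ‖radialDeriv (fun y => ‖f y‖ ^ r) x‖ ≤ r * (‖radialDeriv f x‖ * ‖f x‖ ^ (r - 1)) := by
  have hr₀ : 0 < r := one_pos.trans hr
  rw [radialDeriv, hf.fderiv_norm_rpow hr]
  calc ‖(r * ‖f x‖ ^ (r - 2)) * ⟪f x, radialDeriv f x⟫‖
      = r * ‖f x‖ ^ (r - 2) * ‖⟪f x, radialDeriv f x⟫‖ := by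
        rw [norm_mul, norm_of_nonneg (mul_nonneg hr₀.le (by positivity))]
    _ ≤ r * ‖f x‖ ^ (r - 2) * (‖f x‖ * ‖radialDeriv f x‖) := by
        gcongr
        exact norm_inner_le_norm _ _
    _ = r * (‖radialDeriv f x‖ * ‖f x‖ ^ (r - 1)) := by
        rw [show r - 1 = r - 2 + 1 by ring, rpow_add_one' (norm_nonneg _) (by linarith)]
        ring

lemma norm_rpow_neg_smul_fderiv_norm_rpow_le {f : E → F} (hf : Differentiable ℝ f) {r : ℝ}
    (hr : 1 < r) (s : ℝ) {x : E} (hx : x ≠ 0) :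
    ‖‖x‖ ^ (-s) • fderiv ℝ (fun y => ‖f y‖ ^ r) x x‖ ≤
      r * (‖x‖ ^ (1 - s) * (‖radialDeriv f x‖ * ‖f x‖ ^ (r - 1))) := by
  have hweight : ‖x‖ ^ (1 - s) = ‖x‖ ^ (-s) * ‖x‖ := by
    rw [← rpow_add_one (norm_ne_zero_iff.2 hx), neg_add_eq_sub]
  rw [← norm_smul_radialDeriv, smul_smul, ← hweight, norm_smul, norm_of_nonneg (by positivity),
    mul_left_comm]
  gcongr
  exact norm_radialDeriv_norm_rpow_le hf hr x

end RadialDerivative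

section CaffarelliKohnNirenberg

open Module

variable {E F : Type*} [NormedAddCommGroup E] [NormedSpace ℝ E] [FiniteDimensional ℝ E]
  [Nontrivial E] [MeasurableSpace E] [BorelSpace E] {μ : Measure E} [μ.IsAddHaarMeasure]
  [NormedAddCommGroup F] [InnerProductSpace ℝ F]

theorem mul_integral_norm_rpow_le_integral_radialDeriv {r s : ℝ} (hr : 1 < r)
    (hs : s < finrank ℝ E) {f : E → F} (hf : ContDiff ℝ 1 f) (hsupp : HasCompactSupport f) :
    (finrank ℝ E - s) * ∫ x, ‖f x‖ ^ r * ‖x‖ ^ (-s) ∂μ ≤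
      r * ∫ x, ‖x‖ ^ (1 - s) * (‖radialDeriv f x‖ * ‖f x‖ ^ (r - 1)) ∂μ := by
  have hr₀ : 0 < r := one_pos.trans hr
  have hfr₁ : MemLp (fun x => ‖f x‖ ^ (r - 1)) ⊤ μ :=
    memLp_top_norm_rpow (hf.continuous.memLp_top_of_hasCompactSupport hsupp μ) (sub_pos.2 hr).le
  have hint : Integrable
      (fun x => ‖x‖ ^ (1 - s) * (‖radialDeriv f x‖ * ‖f x‖ ^ (r - 1))) μ := by
    have := integrable_norm_rpow_neg_smul (μ := μ) (s := s - 1) (by linarith)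
      (hfr₁.mul (memLp_top_radialDeriv hf hsupp).norm)
      (hasCompactSupport_radialDeriv hsupp).norm.mul_right
    simpa only [neg_sub, smul_eq_mul, Pi.mul_apply] using this
  calc (finrank ℝ E - s) * ∫ x, ‖f x‖ ^ r * ‖x‖ ^ (-s) ∂μ
      = -∫ x, ‖x‖ ^ (-s) • fderiv ℝ (fun y => ‖f y‖ ^ r) x x ∂μ := by
        rw [integral_norm_rpow_neg_smul_fderiv_apply_self hs (hf.norm_rpow hr)
          (hasCompactSupport_norm_rpow hsupp hr₀.ne'), smul_eq_mul, ← neg_mul, neg_sub]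
        simp only [smul_eq_mul, mul_comm]
    _ ≤ ∫ x, ‖‖x‖ ^ (-s) • fderiv ℝ (fun y => ‖f y‖ ^ r) x x‖ ∂μ :=
        (neg_le_abs _).trans (norm_integral_le_integral_norm (_ : E → ℝ))
    _ ≤ ∫ x, r * (‖x‖ ^ (1 - s) * (‖radialDeriv f x‖ * ‖f x‖ ^ (r - 1))) ∂μ := by
        refine integral_mono_of_nonneg (.of_forall fun _ => norm_nonneg _) (hint.const_mul r) ?_
        filter_upwards [Measure.ae_ne μ 0] with x hx using
          norm_rpow_neg_smul_fderiv_norm_rpow_le (hf.differentiable one_ne_zero) hr s hx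
    _ = r * ∫ x, ‖x‖ ^ (1 - s) * (‖radialDeriv f x‖ * ‖f x‖ ^ (r - 1)) ∂μ :=
        integral_const_mul _ _

lemma sub_div_pos_iff_mul_lt {c d e : ℝ} (hc : 0 < c) (hd : 0 < d) :
    0 < 1 / c - e / d ↔ e * c < d := by
  rw [sub_pos, div_lt_div_iff₀ hd hc, one_mul]

theorem ckn_radial_general {p r α β γ : ℝ} (hp : 1 < p) (hr : 1 < r)
    (hγ : 0 < 1 / r - γ / finrank ℝ E) (hα : 0 < 1 / p - α / finrank ℝ E)
    (hβ : 0 < 1 - β / finrank ℝ E) (hbal : γ = (1 + α) / r + ((p - 1) / (p * r)) * β)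
    {f : E → F} (hf : ContDiff ℝ 1 f) (hsupp : HasCompactSupport f) :
    ∫ x, ‖f x‖ ^ r * ‖x‖ ^ (-(γ * r)) ∂μ ≤
      (r / (finrank ℝ E - γ * r)) *
        (∫ x, ‖radialDeriv f x‖ ^ p * ‖x‖ ^ (-(α * p)) ∂μ) ^ (1 / p) *
        (∫ x, ‖f x‖ ^ (p * (r - 1) / (p - 1)) * ‖x‖ ^ (-β) ∂μ) ^ ((p - 1) / p) := by
  have hp₀ : 0 < p := one_pos.trans hp
  have hr₀ : 0 < r := one_pos.trans hr
  have hp₁ : 0 < p - 1 := sub_pos.2 hp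
  have hr₁ : 0 < r - 1 := sub_pos.2 hr
  have hd : (0 : ℝ) < finrank ℝ E := Nat.cast_pos.2 finrank_pos
  replace hγ : γ * r < finrank ℝ E := (sub_div_pos_iff_mul_lt hr₀ hd).1 hγ
  replace hα : α * p < finrank ℝ E := (sub_div_pos_iff_mul_lt hp₀ hd).1 hα
  replace hβ : β < finrank ℝ E := by rwa [sub_pos, div_lt_one hd] at hβ
  have hexp : 1 - γ * r = -(α + β * ((p - 1) / p)) := by
    rw [hbal]
    field_simp
    ring
  have hcancel : β * ((p - 1) / p) * (p / (p - 1)) = β := by field_simp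
  have hHolder := integral_norm_rpow_neg_mul_norm_mul_norm_le (μ := μ) (.conjExponent hp) hα
    (hcancel.trans_lt hβ) (memLp_top_radialDeriv hf hsupp) (hasCompactSupport_radialDeriv hsupp)
    (memLp_top_norm_rpow (hf.continuous.memLp_top_of_hasCompactSupport hsupp μ) hr₁.le)
    (hasCompactSupport_norm_rpow hsupp hr₁.ne')
  have hnorm (x : E) : ‖‖f x‖ ^ (r - 1)‖ = ‖f x‖ ^ (r - 1) := norm_of_nonneg (by positivity)
  have hpow (x : E) : (‖f x‖ ^ (r - 1)) ^ (p / (p - 1)) = ‖f x‖ ^ (p * (r - 1) / (p - 1)) := by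
    rw [← rpow_mul (norm_nonneg _), mul_div_left_comm, mul_div_assoc, mul_div_left_comm]
  simp only [conjExponent, hcancel, hnorm, hpow, ← hexp, one_div_div] at hHolder
  rw [mul_assoc, div_mul_eq_mul_div, le_div_iff₀' (sub_pos.2 hγ)]
  exact (mul_integral_norm_rpow_le_integral_radialDeriv hr hγ hf hsupp).trans
    (mul_le_mul_of_nonneg_left hHolder hr₀.le)

end CaffarelliKohnNirenberg

/-- Sharp CKN inequality on ℝⁿ with the radial derivative `∂_r f(x) = ⟨x/|x|, ∇f(x)⟩`. -/
theorem ckn_radial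
    (n : ℕ) (hn : 2 ≤ n) (p r α β γ : ℝ) (hp : 1 < p) (hr : 1 < r)
    (h1 : 0 < 1/r - γ/n) (h2 : 0 < 1/p - α/n) (h3 : 0 < 1 - β/n)
    (hbal : γ = (1+α)/r + ((p-1)/(p*r)) * β)
    (f : EuclideanSpace ℝ (Fin n) → ℝ) (hf : ContDiff ℝ (⊤ : ℕ∞) f)
    (hsupp : HasCompactSupport f) :
    ∫ x : EuclideanSpace ℝ (Fin n), |f x| ^ r * ‖x‖ ^ (-(γ * r)) ≤
      (r / (n - γ * r)) *
        (∫ x : EuclideanSpace ℝ (Fin n),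
            |⟪‖x‖⁻¹ • x, gradient f x⟫| ^ p * ‖x‖ ^ (-(α * p))) ^ (1/p) *
        (∫ x : EuclideanSpace ℝ (Fin n),
            |f x| ^ (p * (r-1) / (p-1)) * ‖x‖ ^ (-β)) ^ ((p-1)/p) := by
  have : Nonempty (Fin n) := ⟨⟨0, by omega⟩⟩
  simpa [radialDeriv] using ckn_radial_general (μ := volume) (E := EuclideanSpace ℝ (Fin n))
    hp hr (by simpa using h1) (by simpa using h2) (by simpa using h3) hbal
    (hf.of_le (by simp)) hsupp
end

section
/- Let n ≥ 2, p > 1, r > p, and α, β, γ satisfy 1/r − γ/n > 0, 1/p − α/n > 0, 1 − β/n > 0, γ = (1+α)/r + ((p−1)/(pr))β, and n − β < (1 + α − β/p)·p(r−1)/(r−p). Then for λ > 0 the function f(x) = (λ + |x|^{1+α−β/p})^{(p−1)/(p−r)} attains equality in the CKN inequality: ∫_{ℝ^n} |f|^r |x|^{−γr} dx = (r/(n−γr)) (∫_{ℝ^n} |∇f|^p |x|^{−αp} dx)^{1/p} (∫_{ℝ^n} |f|^{p(r−1)/(p−1)} |x|^{−β} dx)^{(p−1)/p}, and all three integrals are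 finite. -/
open Real MeasureTheory

/-!
Put `s = 1 + α - β/p` and `k = (p-1)/(r-p)`, so that `f = g(‖x‖)` with `g(t) = (lam + t^s)^(-k)`.
Then `‖∇f‖^p ‖x‖^(-αp)` is the constant multiple `(k s)^p` of `|f|^(p(r-1)/(p-1)) ‖x‖^(-β)`, which
is the equality case of Hölder's inequality; what remains is a linear relation between two radial
integrals, and this is the integration of `d/dt (t^a (lam + t^s)^(-kr))` over the half-line, with
`a = n - γr`. The norm enters only through the a.e. identity `‖fderiv ℝ (‖·‖) x‖ = 1`, so the
argument is not Euclidean.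
-/

open Filter Module Set Topology

section Profile

/-- The radial profile `t ↦ (lam + t ^ s) ^ (-m)` of the extremal functions. The exponent is `-m` so
that taking powers multiplies `m`. -/
noncomputable def cknProfile (lam s m t : ℝ) : ℝ := (lam + t ^ s) ^ (-m)

variable {lam s m t a : ℝ}

lemma cknProfile_pos (hlam : 0 < lam) (ht : 0 ≤ t) : 0 < cknProfile lam s m t := by
  unfold cknProfile
  positivity

lemma abs_cknProfile_rpow (hlam : 0 < lam) (ht : 0 ≤ t) (c : ℝ) :
    |cknProfile lam s m t| ^ c = cknProfile lam s (m * c) t := by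
  rw [abs_of_pos (cknProfile_pos hlam ht), cknProfile, cknProfile, ← rpow_mul (by positivity),
    neg_mul]

lemma cknProfile_le_rpow_neg (hlam : 0 < lam) (hm : 0 ≤ m) (ht : 0 ≤ t) :
    cknProfile lam s m t ≤ lam ^ (-m) :=
  rpow_le_rpow_of_nonpos hlam (le_add_of_nonneg_right (rpow_nonneg ht s)) (neg_nonpos.2 hm)

lemma rpow_mul_cknProfile_le (hlam : 0 ≤ lam) (hm : 0 ≤ m) (ht : 0 < t) :
    t ^ a * cknProfile lam s m t ≤ t ^ (a - s * m) := by
  calc t ^ a * cknProfile lam s m t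
      ≤ t ^ a * (t ^ s) ^ (-m) := by
        gcongr
        exact rpow_le_rpow_of_nonpos (rpow_pos_of_pos ht s) (le_add_of_nonneg_left hlam)
          (neg_nonpos.2 hm)
    _ = t ^ (a - s * m) := by rw [← rpow_mul ht.le, ← rpow_add ht, mul_neg, sub_eq_add_neg]

lemma hasDerivAt_cknProfile (hlam : 0 < lam) (ht : 0 < t) :
    HasDerivAt (cknProfile lam s m) (-(m * s * t ^ (s - 1) * cknProfile lam s (m + 1) t)) t := by
  have hbase : HasDerivAt (fun t => lam + t ^ s) (s * t ^ (s - 1)) t :=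
    (hasDerivAt_rpow_const (.inl ht.ne')).const_add lam
  refine (hbase.rpow_const (p := -m) (.inl (by positivity))).congr_deriv ?_
  rw [cknProfile, neg_add']
  ring

lemma continuousAt_cknProfile_zero (hlam : 0 < lam) (hs : 0 < s) :
    ContinuousAt (cknProfile lam s m) 0 := by
  have hbase : ContinuousAt (fun t : ℝ => lam + t ^ s) 0 :=
    continuousAt_const.add (continuousAt_rpow_const 0 s (.inr hs.le))
  refine hbase.rpow_const (.inl ?_)
  rw [zero_rpow hs.ne', add_zero]
  exact hlam.ne'

lemma tendsto_rpow_mul_cknProfile_atTop (hlam : 0 < lam) (hm : 0 ≤ m) (ha : a < s * m) :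
    Tendsto (fun t => t ^ a * cknProfile lam s m t) atTop (𝓝 0) := by
  have hbound : Tendsto (fun t : ℝ => t ^ (a - s * m)) atTop (𝓝 0) := by
    simpa only [neg_sub] using tendsto_rpow_neg_atTop (sub_pos.2 ha)
  refine squeeze_zero' ?_ ?_ hbound
  · filter_upwards [eventually_ge_atTop 0] with t ht
    exact mul_nonneg (rpow_nonneg ht a) (cknProfile_pos hlam ht).le
  · filter_upwards [eventually_gt_atTop 0] with t ht using rpow_mul_cknProfile_le hlam.le hm ht

lemma integrableOn_rpow_mul_cknProfile (hlam : 0 < lam) (hm : 0 ≤ m) (ha : 0 < a)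
    (ham : a < s * m) :
    IntegrableOn (fun t => t ^ (a - 1) * cknProfile lam s m t) (Ioi 0) := by
  have hmeas : Measurable (fun t => t ^ (a - 1) * cknProfile lam s m t) := by
    unfold cknProfile
    fun_prop
  have hnorm {t : ℝ} (ht : 0 < t) :
      ‖t ^ (a - 1) * cknProfile lam s m t‖ = t ^ (a - 1) * cknProfile lam s m t :=
    norm_of_nonneg (mul_nonneg (rpow_nonneg ht.le _) (cknProfile_pos hlam ht.le).le)
  have hnear : IntegrableOn (fun t : ℝ => t ^ (a - 1) * lam ^ (-m)) (Ioc 0 1) := by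
    rw [← intervalIntegrable_iff_integrableOn_Ioc_of_le zero_le_one]
    exact (intervalIntegral.intervalIntegrable_rpow' (by linarith)).mul_const _
  have hfar : IntegrableOn (fun t : ℝ => t ^ (a - 1 - s * m)) (Ioi 1) :=
    integrableOn_Ioi_rpow_of_lt (by linarith) one_pos
  rw [← Ioc_union_Ioi_eq_Ioi (zero_le_one (α := ℝ))]
  refine .union (hnear.mono' hmeas.aestronglyMeasurable ?_)
    (hfar.mono' hmeas.aestronglyMeasurable ?_)
  · filter_upwards [ae_restrict_mem measurableSet_Ioc] with t ht
    rw [hnorm ht.1]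
    exact mul_le_mul_of_nonneg_left (cknProfile_le_rpow_neg hlam hm ht.1.le)
      (rpow_nonneg ht.1.le _)
  · filter_upwards [ae_restrict_mem measurableSet_Ioi] with t ht
    have ht0 : 0 < t := one_pos.trans ht
    rw [hnorm ht0]
    exact rpow_mul_cknProfile_le hlam.le hm ht0

lemma integral_rpow_mul_cknProfile (hlam : 0 < lam) (hm : 0 ≤ m) (ha : 0 < a) (ham : a < s * m) :
    a * ∫ t in Ioi 0, t ^ (a - 1) * cknProfile lam s m t =
      m * s * ∫ t in Ioi 0, t ^ (a + s - 1) * cknProfile lam s (m + 1) t := by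
  have hs : 0 < s := pos_of_mul_pos_left (ha.trans ham) hm
  have hint₁ := (integrableOn_rpow_mul_cknProfile hlam hm ha ham).const_mul a
  have hint₂ := (integrableOn_rpow_mul_cknProfile (m := m + 1) (a := a + s) hlam (by linarith)
    (by linarith) (by linarith)).const_mul (m * s)
  have hderiv : ∀ t ∈ Ioi (0 : ℝ), HasDerivAt (fun t => t ^ a * cknProfile lam s m t)
      (a * (t ^ (a - 1) * cknProfile lam s m t) -
        m * s * (t ^ (a + s - 1) * cknProfile lam s (m + 1) t)) t := by
    intro t ht
    refine ((hasDerivAt_rpow_const (.inl (ne_of_gt ht))).mul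
      (hasDerivAt_cknProfile hlam ht)).congr_deriv ?_
    rw [add_sub_assoc, rpow_add ht]
    ring
  have hcont : ContinuousWithinAt (fun t => t ^ a * cknProfile lam s m t) (Ici 0) 0 :=
    ((continuousAt_rpow_const 0 a (.inr ha.le)).mul
      (continuousAt_cknProfile_zero hlam hs)).continuousWithinAt
  have hFTC := integral_Ioi_of_hasDerivAt_of_tendsto hcont hderiv (hint₁.sub hint₂)
    (tendsto_rpow_mul_cknProfile_atTop hlam hm ham)
  rw [integral_sub hint₁ hint₂, integral_const_mul, integral_const_mul, zero_rpow ha.ne',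
    zero_mul, sub_zero] at hFTC
  exact sub_eq_zero.1 hFTC

end Profile

section FDeriv

variable {E : Type*} [NormedAddCommGroup E] [NormedSpace ℝ E] [Nontrivial E] {x : E}

lemma norm_fderiv_comp_norm {g : ℝ → ℝ} {g' : ℝ} (hg : HasDerivAt g g' ‖x‖)
    (hx : DifferentiableAt ℝ (‖·‖) x) : ‖fderiv ℝ (fun y => g ‖y‖) x‖ = |g'| := by
  have hcomp : HasFDerivAt (fun y => g ‖y‖) (g' • fderiv ℝ (‖·‖) x) x :=
    hg.comp_hasFDerivAt x hx.hasFDerivAt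
  rw [hcomp.fderiv, norm_smul, norm_fderiv_norm hx, mul_one, norm_eq_abs]

lemma norm_fderiv_cknProfile_norm_rpow_mul {lam s m p α : ℝ} (hlam : 0 < lam) (hs : 0 ≤ s)
    (hm : 0 ≤ m) (hx : DifferentiableAt ℝ (‖·‖) x) :
    ‖fderiv ℝ (fun y => cknProfile lam s m ‖y‖) x‖ ^ p * ‖x‖ ^ (-(α * p)) =
      (m * s) ^ p * (cknProfile lam s ((m + 1) * p) ‖x‖ * ‖x‖ ^ ((s - 1 - α) * p)) := by
  have hx0 : 0 < ‖x‖ := by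
    refine norm_pos_iff.2 ?_
    rintro rfl
    exact not_differentiableAt_norm_zero E hx
  have hpow : ‖x‖ ^ ((s - 1 - α) * p) = (‖x‖ ^ (s - 1)) ^ p * ‖x‖ ^ (-(α * p)) := by
    rw [← rpow_mul hx0.le, ← rpow_add hx0]
    ring_nf
  rw [norm_fderiv_comp_norm (hasDerivAt_cknProfile hlam hx0) hx, abs_neg, abs_mul,
    abs_of_nonneg (by positivity), mul_rpow (by positivity) (abs_nonneg _),
    mul_rpow (by positivity) (by positivity), abs_cknProfile_rpow hlam hx0.le, hpow]
  ring

end FDeriv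

section RadialIntegral

variable {E : Type*} [NormedAddCommGroup E] [NormedSpace ℝ E] [FiniteDimensional ℝ E]
  [Nontrivial E]

variable (E) in
lemma pow_finrank_sub_one_smul_mul_rpow {t : ℝ} (ht : 0 < t) (b c : ℝ) :
    t ^ (finrank ℝ E - 1) • (c * t ^ (-b)) = t ^ (finrank ℝ E - b - 1) * c := by
  have hpow : t ^ (finrank ℝ E - b - 1) = t ^ (finrank ℝ E - 1) * t ^ (-b) := by
    rw [← rpow_natCast, ← rpow_add ht, Nat.cast_pred finrank_pos]
    ring_nf
  rw [hpow, smul_eq_mul]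
  ring

variable [MeasurableSpace E] [BorelSpace E] (μ : Measure E) [μ.IsAddHaarMeasure]

lemma integrable_fun_norm_mul_norm_rpow_iff {g : ℝ → ℝ} {b : ℝ} :
    Integrable (fun x => g ‖x‖ * ‖x‖ ^ (-b)) μ ↔
      IntegrableOn (fun t => t ^ (finrank ℝ E - b - 1) * g t) (Ioi 0) := by
  rw [integrable_fun_norm_addHaar μ (f := fun t => g t * t ^ (-b))]
  exact integrableOn_congr_fun
    (fun t ht => pow_finrank_sub_one_smul_mul_rpow E ht b (g t)) measurableSet_Ioi

lemma integral_fun_norm_mul_norm_rpow (g : ℝ → ℝ) (b : ℝ) :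
    ∫ x, g ‖x‖ * ‖x‖ ^ (-b) ∂μ = finrank ℝ E * μ.real (Metric.ball 0 1) *
      ∫ t in Ioi 0, t ^ (finrank ℝ E - b - 1) * g t := by
  rw [integral_fun_norm_addHaar μ fun t => g t * t ^ (-b), nsmul_eq_mul, smul_eq_mul, ← mul_assoc]
  congr 1
  exact setIntegral_congr_fun measurableSet_Ioi
    fun t ht => pow_finrank_sub_one_smul_mul_rpow E ht b (g t)

variable {lam s m b : ℝ}

lemma integrable_cknProfile_norm_mul_norm_rpow (hlam : 0 < lam) (hm : 0 ≤ m)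
    (hb : b < finrank ℝ E) (hbm : finrank ℝ E - b < s * m) :
    Integrable (fun x => cknProfile lam s m ‖x‖ * ‖x‖ ^ (-b)) μ :=
  (integrable_fun_norm_mul_norm_rpow_iff μ).2
    (integrableOn_rpow_mul_cknProfile hlam hm (sub_pos.2 hb) hbm)

lemma integral_cknProfile_norm_mul_norm_rpow (hlam : 0 < lam) (hm : 0 ≤ m)
    (hb : s + b < finrank ℝ E) (hbm : finrank ℝ E - (s + b) < s * m) :
    (finrank ℝ E - (s + b)) * ∫ x, cknProfile lam s m ‖x‖ * ‖x‖ ^ (-(s + b)) ∂μ =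
      m * s * ∫ x, cknProfile lam s (m + 1) ‖x‖ * ‖x‖ ^ (-b) ∂μ := by
  have hradial := integral_rpow_mul_cknProfile hlam hm (sub_pos.2 hb) hbm
  have hexp : (finrank ℝ E - (s + b) + s - 1 : ℝ) = finrank ℝ E - b - 1 := by ring
  rw [integral_fun_norm_mul_norm_rpow, integral_fun_norm_mul_norm_rpow, mul_left_comm, hradial,
    hexp, mul_left_comm]

end RadialIntegral

lemma mul_rpow_one_div_mul_rpow {p c J : ℝ} (hp : 1 ≤ p) (hc : 0 ≤ c) (hJ : 0 ≤ J) :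
    (c ^ p * J) ^ (1 / p) * J ^ ((p - 1) / p) = c * J := by
  have hp0 : 0 < p := one_pos.trans_le hp
  have hsum : 1 / p + (p - 1) / p = 1 := by field_simp; ring
  rw [mul_rpow (rpow_nonneg hc p) hJ, ← rpow_mul hc, mul_one_div_cancel hp0.ne', rpow_one,
    mul_assoc, ← rpow_add_of_nonneg hJ (by positivity) (div_nonneg (by linarith) hp0.le), hsum,
    rpow_one]

theorem ckn_extremal_cknProfile {E : Type*} [NormedAddCommGroup E] [NormedSpace ℝ E]
    [FiniteDimensional ℝ E] [Nontrivial E] [MeasurableSpace E] [BorelSpace E]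
    (μ : Measure E) [μ.IsAddHaarMeasure] {p q r s k α β lam : ℝ} (hlam : 0 < lam) (hp : 1 ≤ p)
    (hr : 0 ≤ r) (hk : 0 ≤ k) (hkp : (k + 1) * p = k * r + 1) (hkq : k * q = k * r + 1)
    (hβ : (s - 1 - α) * p = -β) (hb : s + β < finrank ℝ E)
    (hdecay : finrank ℝ E - β < s * (k * r + 1))
    {f : E → ℝ} (hf : f = fun x => cknProfile lam s k ‖x‖) :
    (∫ x, |f x| ^ r * ‖x‖ ^ (-(s + β)) ∂μ =
      (r / (finrank ℝ E - (s + β))) *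
        (∫ x, ‖fderiv ℝ f x‖ ^ p * ‖x‖ ^ (-(α * p)) ∂μ) ^ (1 / p) *
        (∫ x, |f x| ^ q * ‖x‖ ^ (-β) ∂μ) ^ ((p - 1) / p)) ∧
    Integrable (fun x => |f x| ^ r * ‖x‖ ^ (-(s + β))) μ ∧
    Integrable (fun x => ‖fderiv ℝ f x‖ ^ p * ‖x‖ ^ (-(α * p))) μ ∧
    Integrable (fun x => |f x| ^ q * ‖x‖ ^ (-β)) μ := by
  have hkr : 0 ≤ k * r := mul_nonneg hk hr
  have hs : 0 < s := pos_of_mul_pos_left (b := k * r) (by linarith) hkr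
  have hpow (c : ℝ) (x : E) : |f x| ^ c = cknProfile lam s (k * c) ‖x‖ := by
    rw [hf, abs_cknProfile_rpow hlam (norm_nonneg x)]
  have hgrad : (fun x => ‖fderiv ℝ f x‖ ^ p * ‖x‖ ^ (-(α * p))) =ᵐ[μ]
      fun x => (k * s) ^ p * (cknProfile lam s (k * r + 1) ‖x‖ * ‖x‖ ^ (-β)) := by
    filter_upwards [ae_differentiableAt_norm] with x hx
    rw [hf, norm_fderiv_cknProfile_norm_rpow_mul hlam hs.le hk hx, hkp, hβ]
  have hint : Integrable (fun x => cknProfile lam s (k * r + 1) ‖x‖ * ‖x‖ ^ (-β)) μ :=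
    integrable_cknProfile_norm_mul_norm_rpow μ hlam (by linarith) (by linarith) hdecay
  have hnonneg : 0 ≤ ∫ x, cknProfile lam s (k * r + 1) ‖x‖ * ‖x‖ ^ (-β) ∂μ :=
    integral_nonneg fun x =>
      mul_nonneg (cknProfile_pos hlam (norm_nonneg x)).le (rpow_nonneg (norm_nonneg x) _)
  simp only [hpow, hkq]
  refine ⟨?_, integrable_cknProfile_norm_mul_norm_rpow μ hlam hkr hb (by linarith),
    (hint.const_mul _).congr hgrad.symm, hint⟩
  rw [integral_congr_ae hgrad, integral_const_mul, mul_assoc,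
    mul_rpow_one_div_mul_rpow hp (mul_nonneg hk hs.le) hnonneg, div_mul_eq_mul_div,
    eq_div_iff (sub_pos.2 hb).ne', mul_comm,
    integral_cknProfile_norm_mul_norm_rpow μ hlam hkr hb (by linarith)]
  ring

/-- The norm is differentiable off a `μ`-null set, so `fderiv` takes its junk value at most on a
null set. -/
theorem ckn_extremal_r_gt_p_general {E : Type*} [NormedAddCommGroup E] [NormedSpace ℝ E]
    [FiniteDimensional ℝ E] [Nontrivial E] [MeasurableSpace E] [BorelSpace E]
    (μ : Measure E) [μ.IsAddHaarMeasure] {n : ℕ} (hn : finrank ℝ E = n)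
    {p r α β γ : ℝ} (hp : 1 < p) (hr : p < r) (h1 : 0 < 1 / r - γ / n)
    (hbal : γ = (1 + α) / r + ((p - 1) / (p * r)) * β)
    (hcond : (n : ℝ) - β < (1 + α - β / p) * p * (r - 1) / (r - p))
    {lam : ℝ} (hlam : 0 < lam) {f : E → ℝ}
    (hf : f = fun x => (lam + ‖x‖ ^ (1 + α - β / p)) ^ ((p - 1) / (p - r))) :
    (∫ x, |f x| ^ r * ‖x‖ ^ (-(γ * r)) ∂μ =
      (r / (n - γ * r)) *
        (∫ x, ‖fderiv ℝ f x‖ ^ p * ‖x‖ ^ (-(α * p)) ∂μ) ^ (1 / p) *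
        (∫ x, |f x| ^ (p * (r - 1) / (p - 1)) * ‖x‖ ^ (-β) ∂μ) ^ ((p - 1) / p)) ∧
    Integrable (fun x => |f x| ^ r * ‖x‖ ^ (-(γ * r))) μ ∧
    Integrable (fun x => ‖fderiv ℝ f x‖ ^ p * ‖x‖ ^ (-(α * p))) μ ∧
    Integrable (fun x => |f x| ^ (p * (r - 1) / (p - 1)) * ‖x‖ ^ (-β)) μ := by
  subst hn
  obtain ⟨s, hs⟩ : ∃ s, s = 1 + α - β / p := ⟨_, rfl⟩
  obtain ⟨k, hk⟩ : ∃ k, k = (p - 1) / (r - p) := ⟨_, rfl⟩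
  have hp0 : 0 < p := one_pos.trans hp
  have hr0 : 0 < r := hp0.trans hr
  have hp1 : p - 1 ≠ 0 := (sub_pos.2 hp).ne'
  have hrp : r - p ≠ 0 := (sub_pos.2 hr).ne'
  have hk0 : 0 < k := hk ▸ div_pos (sub_pos.2 hp) (sub_pos.2 hr)
  have hfk : f = fun x => cknProfile lam s k ‖x‖ := by
    rw [hf, ← hs, ← neg_sub r p, div_neg, ← hk]
    rfl
  have hγ : γ * r = s + β := by rw [hbal, hs]; field_simp; ring
  have hβ : (s - 1 - α) * p = -β := by rw [hs]; field_simp; ring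
  have hkp : (k + 1) * p = k * r + 1 := by rw [hk]; field_simp; ring
  have hkq : k * (p * (r - 1) / (p - 1)) = k * r + 1 := by rw [hk]; field_simp; ring
  have hb : s + β < finrank ℝ E := by
    have hd : (0 : ℝ) < finrank ℝ E := Nat.cast_pos.2 finrank_pos
    rwa [sub_pos, div_lt_div_iff₀ hd hr0, one_mul, hγ] at h1
  have hdecay : finrank ℝ E - β < s * (k * r + 1) := by
    refine hcond.trans_eq ?_
    rw [← hs, hk]
    field_simp
    ring
  rw [hγ]
  exact ckn_extremal_cknProfile μ hlam hp.le hr0.le hk0.le hkp hkq hβ hb hdecay hfk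

/-- The functions `f(x) = (λ + |x|^{1+α−β/p})^{(p−1)/(p−r)}` are extremal for the CKN
inequality in the regime `r > p`, and all three weighted integrals are finite. -/
theorem ckn_extremal_r_gt_p
    (n : ℕ) (hn : 2 ≤ n) (p r α β γ : ℝ) (hp : 1 < p) (hr : p < r)
    (h1 : 0 < 1/r - γ/n) (h2 : 0 < 1/p - α/n) (h3 : 0 < 1 - β/n)
    (hbal : γ = (1+α)/r + ((p-1)/(p*r)) * β)
    (hcond : (n : ℝ) - β < (1 + α - β/p) * p * (r-1) / (r-p))
    (lam : ℝ) (hlam : 0 < lam)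
    (f : EuclideanSpace ℝ (Fin n) → ℝ)
    (hf : f = fun x => (lam + ‖x‖ ^ (1 + α - β/p)) ^ ((p-1)/(p-r))) :
    (∫ x : EuclideanSpace ℝ (Fin n), |f x| ^ r * ‖x‖ ^ (-(γ * r)) =
      (r / (n - γ * r)) *
        (∫ x : EuclideanSpace ℝ (Fin n), ‖gradient f x‖ ^ p * ‖x‖ ^ (-(α * p))) ^ (1/p) *
        (∫ x : EuclideanSpace ℝ (Fin n),
            |f x| ^ (p * (r-1)/(p-1)) * ‖x‖ ^ (-β)) ^ ((p-1)/p)) ∧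
    Integrable (fun x : EuclideanSpace ℝ (Fin n) => |f x| ^ r * ‖x‖ ^ (-(γ * r))) ∧
    Integrable (fun x : EuclideanSpace ℝ (Fin n) => ‖gradient f x‖ ^ p * ‖x‖ ^ (-(α * p))) ∧
    Integrable (fun x : EuclideanSpace ℝ (Fin n) =>
      |f x| ^ (p * (r-1)/(p-1)) * ‖x‖ ^ (-β)) := by
  have : NeZero n := ⟨by omega⟩
  simpa only [gradient, LinearIsometryEquiv.norm_map] using ckn_extremal_r_gt_p_general volume
    finrank_euclideanSpace_fin hp hr h1 hbal hcond hlam hf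
end
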